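/- If the formal power series Σ_{n≥0} b_n t^n with integer coefficients is algebraic over Q(t), then for every prime q the sequence (b_n mod q) is q-automatic. -/

import Mathlib

/-- A sequence `a : ℕ → S` is `b`-automatic if there is a finite automaton with output
(finite state set, transition function reading base-`b` digits, output map) computing it. -/
def IsAutomatic {S : Type*} (b : ℕ) (a : ℕ → S) : Prop :=
  ∃ (Q : Type) (_ : Fintype Q) (init : Q) (step : Q → ℕ → Q) (out : Q → S),
    ∀ n, a n = out ((Nat.digits b n).foldl step init)

/-- Step 1a: descend algebraicity from `ℚ[t]` to `ℤ[t]`, as an explicit relation. -/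
theorem christol_int_relation (b : ℕ → ℤ)
    (halg : IsAlgebraic (Polynomial ℚ) (PowerSeries.mk (fun n => (b n : ℚ)))) :
    ∃ p : Polynomial (Polynomial ℤ), p ≠ 0 ∧
      Polynomial.eval₂ (Polynomial.coeToPowerSeries.ringHom (R := ℤ)) (PowerSeries.mk b) p = 0 := by
  let : Algebra (Polynomial ℤ) (Polynomial ℚ) := Polynomial.algebra ℤ ℚ
  let : Algebra (Polynomial ℤ) (PowerSeries ℚ) := PowerSeries.algebraPolynomial
  have : IsScalarTower (Polynomial ℤ) (Polynomial ℚ) (PowerSeries ℚ) := by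
    refine IsScalarTower.of_algebraMap_eq' ?_
    ext <;> simp [PowerSeries.algebraMap_apply', Polynomial.algebraMap_def]
  have hZQ : Algebra.IsAlgebraic ℤ ℚ := IsLocalization.isAlgebraic ℚ (nonZeroDivisors ℤ)
  have : Algebra.IsAlgebraic (Polynomial ℤ) (Polynomial ℚ) := inferInstance
  obtain ⟨p, hp, h⟩ := IsAlgebraic.restrictScalars (Polynomial ℤ) halg
  refine ⟨p, hp, ?_⟩
  have hinj : Function.Injective (PowerSeries.map (Int.castRingHom ℚ)) :=
    PowerSeries.map_injective _ (RingHom.injective_int _)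
  apply hinj
  rw [map_zero, Polynomial.hom_eval₂, ← h, Polynomial.aeval_def]
  congr 1

/-- Step 1b: reduce modulo `q`. -/
theorem christol_mod_relation (b : ℕ → ℤ) (q : ℕ) [Fact q.Prime]
    (halg : IsAlgebraic (Polynomial ℚ) (PowerSeries.mk (fun n => (b n : ℚ)))) :
    IsAlgebraic (Polynomial (ZMod q)) (PowerSeries.mk (fun n => (b n : ZMod q))) := by
  obtain ⟨p, hp, h⟩ := christol_int_relation b halg
  have hq : q.Prime := Fact.out
  set c : Polynomial (Polynomial ℤ) := Polynomial.C (Polynomial.C (q : ℤ)) with hc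
  have hcu : ¬ IsUnit c := by
    rw [hc, Polynomial.isUnit_C, Polynomial.isUnit_C]
    exact (Nat.prime_iff_prime_int.mp hq).not_isUnit
  have hfin : FiniteMultiplicity c p := FiniteMultiplicity.of_not_isUnit hcu hp
  obtain ⟨r, hr, hnd⟩ := hfin.exists_eq_pow_mul_and_not_dvd
  rw [hr, Polynomial.eval₂_mul, Polynomial.eval₂_pow, mul_eq_zero] at h
  have hc0 : Polynomial.eval₂ (Polynomial.coeToPowerSeries.ringHom (R := ℤ)) (PowerSeries.mk b) c
      ≠ 0 := by
    rw [hc, Polynomial.eval₂_C]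
    have : (q : ℤ) ≠ 0 := by exact_mod_cast hq.ne_zero
    intro h0
    apply this
    have h1 := congrArg (PowerSeries.coeff 0) h0
    rwa [Polynomial.coeToPowerSeries.ringHom_apply, Polynomial.coeff_coe, Polynomial.coeff_C_zero,
      map_zero] at h1
  have h2 := h.resolve_left (pow_ne_zero _ hc0)
  refine ⟨r.map (Polynomial.mapRingHom (Int.castRingHom (ZMod q))), ?_, ?_⟩
  · intro h0
    apply hnd
    rw [hc, Polynomial.C_dvd_iff_dvd_coeff]
    intro i
    rw [Polynomial.C_dvd_iff_dvd_coeff]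
    intro j
    have := congrArg (fun s => (s.coeff i).coeff j) h0
    simp only [Polynomial.coeff_map, Polynomial.coe_mapRingHom, Polynomial.coeff_zero] at this
    exact (ZMod.intCast_zmod_eq_zero_iff_dvd _ _).mp this
  · rw [Polynomial.aeval_def, Polynomial.eval₂_map]
    have := congrArg (PowerSeries.map (Int.castRingHom (ZMod q))) h2
    rw [map_zero, Polynomial.hom_eval₂] at this
    rw [← this]
    congr 1
    ext <;> simp [PowerSeries.algebraMap_apply']

/-- Step 2a: linear dependence of the Frobenius powers. -/
theorem christol_lin_dep (q : ℕ) [Fact q.Prime] (f : PowerSeries (ZMod q))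
    (hf : IsAlgebraic (Polynomial (ZMod q)) f) :
    ∃ (m : ℕ) (a : ℕ → Polynomial (ZMod q)), (∃ i < m, a i ≠ 0) ∧
      ∑ i ∈ Finset.range m, (a i : PowerSeries (ZMod q)) * f ^ q ^ i = 0 := by
  obtain ⟨y, hy, hint⟩ := hf.exists_integral_multiple
  set g := y • f with hg
  let A := Algebra.adjoin (Polynomial (ZMod q)) {g}
  have hfg : (Subalgebra.toSubmodule A).FG := hint.fg_adjoin_singleton
  have : Module.Finite (Polynomial (ZMod q)) A := Module.Finite.of_fg hfg
  let v : ℕ → A := fun i => (⟨g, Algebra.self_mem_adjoin_singleton _ _⟩ : A) ^ q ^ i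
  have hv : ¬ LinearIndependent (Polynomial (ZMod q)) v := by
    intro hli
    have := hli.finite_of_isNoetherian
    exact not_finite ℕ
  rw [linearIndependent_iff'] at hv
  push Not at hv
  obtain ⟨s, c, hsum, i, his, hci⟩ := hv
  refine ⟨s.sup id + 1, fun j => if j ∈ s then c j * y ^ q ^ j else 0, ⟨i, ?_, ?_⟩, ?_⟩
  · exact Nat.lt_succ_of_le (Finset.le_sup (f := id) his)
  · simp only [his, if_true]
    exact mul_ne_zero hci (pow_ne_zero _ hy)
  · have hsub : s ⊆ Finset.range (s.sup id + 1) := fun j hj =>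
      Finset.mem_range.mpr (Nat.lt_succ_of_le (Finset.le_sup (f := id) hj))
    rw [← Finset.sum_subset hsub]
    · have := congrArg (Subtype.val) hsum
      rw [AddSubmonoidClass.coe_finsetSum] at this
      simp only [ZeroMemClass.coe_zero] at this
      rw [← this]
      refine Finset.sum_congr rfl fun j hj => ?_
      simp only [hj, if_true, v]
      rw [SetLike.val_smul, SubmonoidClass.coe_pow]
      simp only [hg, Algebra.smul_def, PowerSeries.algebraMap_apply', Polynomial.coe_mul, Polynomial.coe_pow]
      simp [mul_pow, mul_assoc]
    · intro j _ hj
      simp [hj]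

/-- The Cartier operator. -/
noncomputable def cartier (q r : ℕ) : PowerSeries (ZMod q) →+ PowerSeries (ZMod q) where
  toFun h := PowerSeries.mk fun n => PowerSeries.coeff (q * n + r % q) h
  map_zero' := by ext; simp
  map_add' x y := by ext; simp

theorem coeff_cartier (q r n : ℕ) (h : PowerSeries (ZMod q)) :
    PowerSeries.coeff n (cartier q r h) = PowerSeries.coeff (q * n + r % q) h := by
  simp [cartier]

theorem coeff_pow_prime (q : ℕ) [Fact q.Prime] (g : PowerSeries (ZMod q)) (n : ℕ) :
    PowerSeries.coeff n (g ^ q) = if q ∣ n then PowerSeries.coeff (n / q) g else 0 := by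
  have hq : q ≠ 0 := (Fact.out : q.Prime).ne_zero
  have h : g ^ q = PowerSeries.expand q hq g := by
    have := MvPowerSeries.map_frobenius_expand (σ := Unit) (R := ZMod q) q hq (f := g)
    rw [ZMod.frobenius_zmod] at this
    rw [PowerSeries.expand]
    exact this.symm.trans (by simp)
  rw [h, PowerSeries.coeff_expand]

theorem cartier_pow_mul (q r : ℕ) [Fact q.Prime] (g h : PowerSeries (ZMod q)) :
    cartier q r (h * g ^ q) = cartier q r h * g := by
  have hq : 0 < q := (Fact.out : q.Prime).pos
  have hr : r % q < q := Nat.mod_lt _ hq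
  ext n
  rw [coeff_cartier, mul_comm h, mul_comm _ g, PowerSeries.coeff_mul, PowerSeries.coeff_mul]
  rw [Finset.Nat.sum_antidiagonal_eq_sum_range_succ
    (fun i j => PowerSeries.coeff i (g ^ q) * PowerSeries.coeff j h),
    Finset.Nat.sum_antidiagonal_eq_sum_range_succ
    (fun i j => PowerSeries.coeff i g * PowerSeries.coeff j (cartier q r h))]
  symm
  refine Finset.sum_of_injOn (fun i => q * i) ?_ ?_ ?_ ?_
  · intro i _ j _ hij
    exact Nat.eq_of_mul_eq_mul_left hq hij
  · intro i hi
    simp only [Finset.coe_range, Set.mem_Iio] at hi ⊢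
    have : q * i ≤ q * n := Nat.mul_le_mul_left q (by omega)
    omega
  · intro k hk hk'
    rw [coeff_pow_prime, if_neg, zero_mul]
    rintro ⟨i, rfl⟩
    apply hk'
    refine ⟨i, ?_, rfl⟩
    simp only [Finset.coe_range, Set.mem_Iio, Finset.mem_range] at hk ⊢
    by_contra hcon
    have : q * (n + 1) ≤ q * i := Nat.mul_le_mul_left q (by omega)
    rw [Nat.mul_add] at this
    omega
  · intro i hi
    simp only [Finset.mem_range] at hi
    rw [coeff_pow_prime, if_pos (dvd_mul_right _ _), Nat.mul_div_cancel_left _ hq, coeff_cartier]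
    congr 3
    have : q * i ≤ q * n := Nat.mul_le_mul_left q (by omega)
    rw [Nat.mul_sub]
    omega

/-- Power series that are polynomials of degree at most `N`. -/
def degBd (q N : ℕ) : AddSubgroup (PowerSeries (ZMod q)) where
  carrier := {c | ∀ n, N < n → PowerSeries.coeff n c = 0}
  zero_mem' := by intro n _; simp
  add_mem' := by intro a b ha hb n hn; simp [ha n hn, hb n hn]
  neg_mem' := by intro a ha n hn; simp [ha n hn]

theorem mem_degBd {q N : ℕ} {c : PowerSeries (ZMod q)} :
    c ∈ degBd q N ↔ ∀ n, N < n → PowerSeries.coeff n c = 0 := Iff.rfl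

theorem degBd_mono {q M N : ℕ} (h : M ≤ N) {c : PowerSeries (ZMod q)} (hc : c ∈ degBd q M) :
    c ∈ degBd q N := fun n hn => hc n (h.trans_lt hn)

theorem degBd_mul {q M N : ℕ} {c d : PowerSeries (ZMod q)} (hc : c ∈ degBd q M)
    (hd : d ∈ degBd q N) : c * d ∈ degBd q (M + N) := by
  intro n hn
  rw [PowerSeries.coeff_mul]
  refine Finset.sum_eq_zero fun x hx => ?_
  rw [Finset.HasAntidiagonal.mem_antidiagonal] at hx
  by_cases h : M < x.1
  · rw [hc _ h, zero_mul]
  · rw [hd _ (by omega), mul_zero]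

theorem degBd_pow {q M : ℕ} {c : PowerSeries (ZMod q)} (hc : c ∈ degBd q M) (k : ℕ) :
    c ^ k ∈ degBd q (k * M) := by
  induction k with
  | zero =>
    intro n hn
    rw [pow_zero, PowerSeries.coeff_one, if_neg (by omega)]
  | succ k ih =>
    rw [pow_succ, Nat.succ_mul]
    exact degBd_mul ih hc

theorem degBd_cartier {q M N : ℕ} (hq : 0 < q) (r : ℕ) (h : M ≤ q * N)
    {c : PowerSeries (ZMod q)} (hc : c ∈ degBd q M) : cartier q r c ∈ degBd q N := by
  intro n hn
  rw [coeff_cartier]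
  apply hc
  have : q * N < q * n := Nat.mul_lt_mul_of_pos_left hn hq
  omega

theorem degBd_finite (q N : ℕ) [Fact q.Prime] : Finite (degBd q N) := by
  let F : degBd q N → (Fin (N + 1) → ZMod q) := fun c i => PowerSeries.coeff i.1 c.1
  refine Finite.of_injective F ?_
  intro c d hcd
  apply Subtype.ext
  ext n
  by_cases hn : N < n
  · rw [c.2 n hn, d.2 n hn]
  · exact congrFun hcd ⟨n, by omega⟩

theorem exists_cartier_ne_zero (q : ℕ) [Fact q.Prime] {c : PowerSeries (ZMod q)} (hc : c ≠ 0) :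
    ∃ r, cartier q r c ≠ 0 := by
  by_contra! hcon
  apply hc
  ext n
  have := congrArg (PowerSeries.coeff (n / q)) (hcon n)
  rwa [coeff_cartier, Nat.div_add_mod] at this

/-- Step 2b: a relation with nonzero lowest coefficient. -/
theorem christol_relation (q D : ℕ) [Fact q.Prime] (f : PowerSeries (ZMod q)) (m : ℕ) :
    ∀ a : ℕ → PowerSeries (ZMod q), (∀ i, a i ∈ degBd q D) → (∃ i < m, a i ≠ 0) →
      ∑ i ∈ Finset.range m, a i * f ^ q ^ i = 0 →
    ∃ (k : ℕ) (a : ℕ → PowerSeries (ZMod q)), (∀ i, a i ∈ degBd q D) ∧ a 0 ≠ 0 ∧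
      ∑ i ∈ Finset.range k, a (i + 1) * f ^ q ^ (i + 1) + a 0 * f = 0 := by
  have hq : 0 < q := (Fact.out : q.Prime).pos
  induction m with
  | zero => rintro a _ ⟨i, hi, _⟩; omega
  | succ m ih =>
    rintro a ha ⟨i, hi, hai⟩ hsum
    rw [Finset.sum_range_succ'] at hsum
    by_cases h0 : a 0 = 0
    · have hi0 : i ≠ 0 := by rintro rfl; exact hai h0
      obtain ⟨j, rfl⟩ := Nat.exists_eq_succ_of_ne_zero hi0
      obtain ⟨r, hr⟩ := exists_cartier_ne_zero q hai
      refine ih (fun i => cartier q r (a (i + 1)))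
        (fun i => degBd_cartier hq r (Nat.le_mul_of_pos_left D hq) (ha _)) ⟨j, by omega, hr⟩ ?_
      have := congrArg (cartier q r) hsum
      rw [h0, zero_mul, add_zero, map_sum, map_zero] at this
      rw [← this]
      refine Finset.sum_congr rfl fun k _ => ?_
      rw [pow_succ q k, pow_mul, cartier_pow_mul]
    · exact ⟨m, a, ha, h0, by simpa using hsum⟩

/-- The finite set of states. -/
def states (q D k : ℕ) (d f : PowerSeries (ZMod q)) : Set (PowerSeries (ZMod q)) :=
  {h | ∃ c : Fin (k + 1) → degBd q D, d * h = ∑ i, (c i).1 * f ^ q ^ (i : ℕ)}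

theorem states_finite (q D k : ℕ) [Fact q.Prime] (d f : PowerSeries (ZMod q)) (hd : d ≠ 0) :
    (states q D k d f).Finite := by
  have := degBd_finite q D
  have : states q D k d f = ⋃ c : Fin (k + 1) → degBd q D,
      {h | d * h = ∑ i, (c i).1 * f ^ q ^ (i : ℕ)} := by
    ext h; simp [states]
  rw [this]
  refine Set.finite_iUnion fun c => Set.Subsingleton.finite ?_
  intro x hx y hy
  exact mul_left_cancel₀ hd (hx.trans hy.symm)

theorem states_closed (q D k : ℕ) [Fact q.Prime] (f : PowerSeries (ZMod q))
    (a : ℕ → PowerSeries (ZMod q)) (ha : ∀ i, a i ∈ degBd q D)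
    (hrel : ∑ i ∈ Finset.range k, a (i + 1) * f ^ q ^ (i + 1) + a 0 * f = 0)
    (r : ℕ) (h : PowerSeries (ZMod q)) (hh : h ∈ states q D k (a 0) f) :
    cartier q r h ∈ states q D k (a 0) f := by
  have hq2 : 2 ≤ q := (Fact.out : q.Prime).two_le
  obtain ⟨c, hc⟩ := hh
  set d := a 0 with hd
  let e : Fin k → PowerSeries (ZMod q) := fun i =>
    d ^ (q - 2) * (d * (c i.succ).1 - (c 0).1 * a (i + 1))
  have he : ∀ i, cartier q r (e i) ∈ degBd q D := by
    intro i
    refine degBd_cartier (M := (q - 2) * D + (D + D)) (by omega) r ?_ ?_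
    · obtain ⟨t, rfl⟩ := Nat.exists_eq_add_of_le hq2
      simp only [Nat.add_sub_cancel_left]
      nlinarith
    · exact degBd_mul (degBd_pow (ha 0) _)
        (AddSubgroup.sub_mem _ (degBd_mul (ha 0) (c _).2) (degBd_mul (c 0).2 (ha _)))
  rw [← Fin.sum_univ_eq_sum_range (fun i => a (i + 1) * f ^ q ^ (i + 1))] at hrel
  have hdf : d * f = -∑ i : Fin k, a (i + 1) * f ^ q ^ ((i : ℕ) + 1) :=
    eq_neg_of_add_eq_zero_right hrel
  have key : h * d ^ q = ∑ i : Fin k, e i * (f ^ q ^ (i : ℕ)) ^ q := by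
    obtain ⟨t, ht⟩ := Nat.exists_eq_add_of_le hq2
    have hdq : d ^ q = d ^ (q - 2) * d * d := by
      rw [← pow_succ, ← pow_succ]; congr 1; omega
    calc h * d ^ q = d ^ (q - 2) * d * (d * h) := by rw [hdq]; ring
      _ = d ^ (q - 2) * ((c 0).1 * (d * f)
          + d * ∑ i : Fin k, (c i.succ).1 * f ^ q ^ ((i : ℕ) + 1)) := by
        rw [hc, Fin.sum_univ_succ]
        simp only [Fin.val_zero, pow_zero, pow_one, Fin.val_succ]
        ring
      _ = _ := by
        rw [hdf, mul_neg, Finset.mul_sum, Finset.mul_sum, ← Finset.sum_neg_distrib,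
          ← Finset.sum_add_distrib, Finset.mul_sum]
        refine Finset.sum_congr rfl fun i _ => ?_
        rw [← pow_mul, ← pow_succ]
        simp only [e]
        ring
  refine ⟨Fin.snoc (fun i => ⟨cartier q r (e i), he i⟩) 0, ?_⟩
  rw [Fin.sum_univ_castSucc]
  simp only [Fin.snoc_castSucc, Fin.snoc_last, Fin.val_castSucc]
  rw [mul_comm, ← cartier_pow_mul, key, map_sum]
  simp [cartier_pow_mul]

theorem foldl_cartier (q : ℕ) (hq : 1 < q) (n : ℕ) : ∀ h : PowerSeries (ZMod q),
    PowerSeries.coeff n h =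
      PowerSeries.coeff 0 ((Nat.digits q n).foldl (fun g r => cartier q r g) h) := by
  induction n using Nat.strong_induction_on with
  | _ n ih =>
    intro h
    rcases Nat.eq_zero_or_pos n with rfl | hn
    · simp
    · rw [Nat.digits_def' hq hn, List.foldl_cons, ← ih _ (Nat.div_lt_self hn hq), coeff_cartier,
        Nat.mod_mod, Nat.div_add_mod]

theorem automatic_of_states (q : ℕ) (hq : 1 < q) (f : PowerSeries (ZMod q))
    (H : Set (PowerSeries (ZMod q))) (hfin : H.Finite) (hf : f ∈ H)
    (hcl : ∀ r, ∀ h ∈ H, cartier q r h ∈ H) :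
    IsAutomatic q (fun n => PowerSeries.coeff n f) := by
  refine ⟨H, hfin.fintype, ⟨f, hf⟩, fun g r => ⟨cartier q r g.1, hcl r _ g.2⟩,
    fun g => PowerSeries.coeff 0 g.1, fun n => ?_⟩
  have : ∀ (l : List ℕ) (g : H),
      (l.foldl (fun (g : H) r => (⟨cartier q r g.1, hcl r _ g.2⟩ : H)) g).1 =
        l.foldl (fun g r => cartier q r g) g.1 := by
    intro l
    induction l with
    | nil => intro g; rfl
    | cons x l ih => intro g; rw [List.foldl_cons, List.foldl_cons, ih]
  simp only [this]
  exact foldl_cartier q hq n f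

theorem christol_corollary (b : ℕ → ℤ)
    (halg : IsAlgebraic (Polynomial ℚ) (PowerSeries.mk (fun n => (b n : ℚ))))
    (q : ℕ) (hq : q.Prime) :
    IsAutomatic q (fun n => (b n : ZMod q)) := by
  have : Fact q.Prime := ⟨hq⟩
  obtain ⟨m, p, ⟨i, him, hi⟩, hsum⟩ := christol_lin_dep q _ (christol_mod_relation b q halg)
  set f : PowerSeries (ZMod q) := PowerSeries.mk (fun n => (b n : ZMod q)) with hf
  let D := (Finset.range m).sup fun i => (p i).natDegree
  obtain ⟨k, a, ha, ha0, hrel⟩ := christol_relation q D f m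
    (fun i => if i < m then (p i : PowerSeries (ZMod q)) else 0)
    (by
      intro j
      by_cases hj : j < m
      · simp only [hj, if_true]
        intro n hn
        rw [Polynomial.coeff_coe]
        refine Polynomial.coeff_eq_zero_of_natDegree_lt (lt_of_le_of_lt ?_ hn)
        exact Finset.le_sup (f := fun i => (p i).natDegree) (Finset.mem_range.mpr hj)
      · simp only [hj, if_false]
        exact zero_mem _)
    ⟨i, him, by simpa [him] using hi⟩
    (by
      rw [← hsum]
      refine Finset.sum_congr rfl fun j hj => ?_
      rw [if_pos (Finset.mem_range.mp hj)])
  have hmain := automatic_of_states q hq.one_lt f (states q D k (a 0) f)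
    (states_finite q D k (a 0) f ha0)
    ⟨Fin.cons ⟨a 0, ha 0⟩ (fun _ => 0), by rw [Fin.sum_univ_succ]; simp⟩
    (states_closed q D k f a ha hrel)
  simpa [hf] using hmain
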